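/- arXiv:1510.00761 — 2 statements merged into one kernel-verified Lean document; each statement's English description precedes it below -/
import Mathlib

section
/- Fix n ≥ 1, a compact set D ⊆ [0,1]^n, a twice continuously differentiable vector field f : ℝ^n → ℝ^n, a flow φ : [0,∞) × D → D with ∂φ/∂t(t,x) = f(φ(t,x)) and φ(0,x) = x, and a unique equilibrium point x* ∈ D (f(x*) = 0). Suppose the flow is globally asymptotically stable and locally exponentially stable. Suppose that for each integer M ≥ 1 we are given a finite set S_M ⊆ D, normalized transition rates q_M : S_M × S_M → ℝ≥0 with q_M(x,x) = 0, and a stationary distribution π_M of the continuous-time Markov chain with rates Q_M(x,y) = M·q_M(x,y), and that: (i) asymptotic accuracy: Σ_{x∈S_M} π_M(x)·‖f(x) − M·Σ_{y≠x} q_M(x,y)(y − x)‖ → 0 as M → ∞; (ii) Σ_{x∈S_M} π_M(x)·Σ_{y≠x} q_M(x,y)·M·‖y − x‖² → 0 as M → ∞; (iii) max{‖y − x‖ : x,y ∈ S_M, q_M(x,y) > 0} → 0 as M → ∞. Then Σ_{x∈S_M} π_M(x)·‖x − x*‖² → 0 as M → ∞; that is, the stationary distributions converge in the mean-square sense to the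 equilibrium point of the mean-field model. -/
open Filter MeasureTheory

attribute [local instance] Classical.propDecidable

/-!
For a `C²` observable `h`, stationarity and a second-order Taylor expansion make the stationary mean
of `Dh · f` small, with an error depending only on the `C^{1,1}` constants of `h`. After cutting `f`
and `h` off outside `D`, the functions `h ∘ Φ^k`, with `Φ` one step of the Euler scheme, have
`C^{1,1}` constants that are bounded on bounded time intervals independently of the step size.
Chaining the steps and letting the step size tend to `0` shows that, for each fixed `t`, the means
of `h ∘ φ t` and of `h` differ by a quantity that vanishes in the limit.

By compactness, attraction of every single orbit already forces the Birkhoff averages of `h` along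
the time-one map to be, uniformly on `D`, at most slightly above `h x*`: each orbit is cut into
blocks of bounded length with small average. Hence the upper limit of the stationary means of `h` is
at most `h x*`. Applied to `h` and `-h` this gives convergence to `h x*`, in particular for
`h x = ‖x - x*‖²`.
-/

section MeanField

open Set
open scoped NNReal Topology

section C11

variable {E F G : Type*} [NormedAddCommGroup E] [NormedSpace ℝ E]
  [NormedAddCommGroup F] [NormedSpace ℝ F] [NormedAddCommGroup G] [NormedSpace ℝ G]

/-- A `C^{1,1}` map with explicit constants: it is differentiable and `A`-Lipschitz, and its
derivative is `B`-Lipschitz. The class is closed under composition, with constants that can be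
tracked along an Euler scheme. -/
structure IsC11With (A B : ℝ≥0) (h : E → F) : Prop where
  differentiable : Differentiable ℝ h
  lipschitzWith : LipschitzWith A h
  lipschitzWith_fderiv : LipschitzWith B (fderiv ℝ h)

namespace IsC11With

variable {A A' B B' : ℝ≥0} {h : E → F}

theorem mono (hh : IsC11With A B h) (hA : A ≤ A') (hB : B ≤ B') : IsC11With A' B' h :=
  ⟨hh.differentiable, hh.lipschitzWith.weaken hA, hh.lipschitzWith_fderiv.weaken hB⟩

theorem norm_fderiv_le (hh : IsC11With A B h) (x : E) : ‖fderiv ℝ h x‖ ≤ A :=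
  norm_fderiv_le_of_lipschitz ℝ hh.lipschitzWith

theorem norm_sub_sub_fderiv_le (hh : IsC11With A B h) (x y : E) :
    ‖h y - h x - fderiv ℝ h x (y - x)‖ ≤ B * ‖y - x‖ ^ 2 := by
  have fderiv_close : ∀ z ∈ Metric.closedBall x ‖y - x‖,
      ‖fderiv ℝ h z - fderiv ℝ h x‖ ≤ B * ‖y - x‖ := fun z hz =>
    (hh.lipschitzWith_fderiv.norm_sub_le z x).trans <| by
      gcongr
      exact mem_closedBall_iff_norm.1 hz
  calc ‖h y - h x - fderiv ℝ h x (y - x)‖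
      ≤ B * ‖y - x‖ * ‖y - x‖ :=
        Convex.norm_image_sub_le_of_norm_hasFDerivWithin_le'
          (fun z _ => (hh.differentiable z).hasFDerivAt.hasFDerivWithinAt) fderiv_close
          (convex_closedBall x _) (by simp) (by simp [dist_eq_norm])
    _ = B * ‖y - x‖ ^ 2 := by ring

theorem comp {g : F → G} (hg : IsC11With A B g) (hh : IsC11With A' B' h) :
    IsC11With (A * A') (B * A' ^ 2 + A * B') (g ∘ h) := by
  refine ⟨hg.differentiable.comp hh.differentiable, hg.lipschitzWith.comp hh.lipschitzWith,
    LipschitzWith.of_dist_le_mul fun x y => ?_⟩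
  have chain_rule (z : E) : fderiv ℝ (g ∘ h) z = (fderiv ℝ g (h z)).comp (fderiv ℝ h z) :=
    fderiv_comp z (hg.differentiable (h z)) (hh.differentiable z)
  have outer : ‖fderiv ℝ g (h x) - fderiv ℝ g (h y)‖ ≤ B * (A' * ‖x - y‖) :=
    (hg.lipschitzWith_fderiv.norm_sub_le _ _).trans <| by
      gcongr
      exact hh.lipschitzWith.norm_sub_le x y
  have split : fderiv ℝ (g ∘ h) x - fderiv ℝ (g ∘ h) y =
      (fderiv ℝ g (h x) - fderiv ℝ g (h y)).comp (fderiv ℝ h x) +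
        (fderiv ℝ g (h y)).comp (fderiv ℝ h x - fderiv ℝ h y) := by
    rw [chain_rule, chain_rule, ContinuousLinearMap.sub_comp, ContinuousLinearMap.comp_sub]
    abel
  rw [dist_eq_norm, dist_eq_norm, split]
  calc _ ≤ ‖fderiv ℝ g (h x) - fderiv ℝ g (h y)‖ * ‖fderiv ℝ h x‖ +
        ‖fderiv ℝ g (h y)‖ * ‖fderiv ℝ h x - fderiv ℝ h y‖ :=
        (norm_add_le _ _).trans <|
          add_le_add (ContinuousLinearMap.opNorm_comp_le _ _)
            (ContinuousLinearMap.opNorm_comp_le _ _)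
    _ ≤ B * (A' * ‖x - y‖) * A' + A * (B' * ‖x - y‖) := by
        gcongr
        · exact hh.norm_fderiv_le x
        · exact hg.norm_fderiv_le (h y)
        · exact hh.lipschitzWith_fderiv.norm_sub_le x y
    _ = _ := by push_cast; ring

theorem exists_of_hasCompactSupport (hh : ContDiff ℝ 2 h) (hsupp : HasCompactSupport h) :
    ∃ A B : ℝ≥0, IsC11With A B h := by
  obtain ⟨A, hA⟩ := hh.lipschitzWith_of_hasCompactSupport hsupp two_ne_zero
  obtain ⟨B, hB⟩ := (hh.fderiv_right (m := 1) (by norm_num)).lipschitzWith_of_hasCompactSupport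
    (hsupp.fderiv ℝ) one_ne_zero
  exact ⟨A, B, hh.differentiable two_ne_zero, hA, hB⟩

theorem exists_eqOn_of_isCompact [FiniteDimensional ℝ E] {D : Set E} (hD : IsCompact D)
    (hh : ContDiff ℝ 2 h) :
    ∃ (A B : ℝ≥0) (C : ℝ) (H : E → F), IsC11With A B H ∧ (∀ x, ‖H x‖ ≤ C) ∧ EqOn H h D := by
  obtain ⟨R, hR⟩ := hD.isBounded.subset_closedBall (0 : E)
  let χ : ContDiffBump (0 : E) := ⟨max R 1, max R 1 + 1, by positivity, by linarith⟩
  have χ_eq_one : ∀ x ∈ D, χ x = 1 := fun x hx =>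
    χ.one_of_mem_closedBall (Metric.closedBall_subset_closedBall (le_max_left R 1) (hR hx))
  have contDiff_cutoff : ContDiff ℝ 2 fun x => χ x • h x := χ.contDiff.smul hh
  have compact_cutoff : HasCompactSupport fun x => χ x • h x := χ.hasCompactSupport.smul_right
  obtain ⟨A, B, hAB⟩ := exists_of_hasCompactSupport contDiff_cutoff compact_cutoff
  obtain ⟨C, hC⟩ := compact_cutoff.exists_bound_of_continuous contDiff_cutoff.continuous
  exact ⟨A, B, C, _, hAB, hC, fun x hx => by simp only [χ_eq_one x hx, one_smul]⟩

end IsC11With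

end C11

section EulerScheme

variable {E F : Type*} [NormedAddCommGroup E] [NormedSpace ℝ E]
  [NormedAddCommGroup F] [NormedSpace ℝ F] {f : E → E} {h : E → F}
  {A B L K T : ℝ≥0}

/-- One step of length `s` of the explicit Euler scheme for `ẋ = f x`. -/
def eulerStep (f : E → E) (s : ℝ) (x : E) : E := x + s • f x

theorem isC11With_eulerStep (hf : IsC11With L K f) (s : ℝ≥0) :
    IsC11With (1 + s * L) (s * K) (eulerStep f s) := by
  have hasFDerivAt (x : E) : HasFDerivAt (eulerStep f s)
      (ContinuousLinearMap.id ℝ E + (s : ℝ) • fderiv ℝ f x) x :=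
    (hasFDerivAt_id x).add ((hf.differentiable x).hasFDerivAt.const_smul (s : ℝ))
  refine ⟨fun x => (hasFDerivAt x).differentiableAt, ?_, ?_⟩
  · have := LipschitzWith.id.add ((lipschitzWith_smul (s : ℝ)).comp hf.lipschitzWith)
    rwa [NNReal.nnnorm_eq] at this
  · rw [funext fun x => (hasFDerivAt x).fderiv]
    have := (LipschitzWith.const (ContinuousLinearMap.id ℝ E)).add
      ((lipschitzWith_smul (s : ℝ)).comp hf.lipschitzWith_fderiv)
    rwa [NNReal.nnnorm_eq, zero_add] at this

theorem IsC11With.comp_eulerStep_iterate (hh : IsC11With A B h) (hf : IsC11With L K f)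
    (s : ℝ≥0) (k : ℕ) :
    IsC11With (A * (1 + s * L) ^ k) (((1 + s * L) ^ k) ^ 2 * (B + k * s * K * A))
      (h ∘ (eulerStep f s)^[k]) := by
  induction k with
  | zero => simpa using hh
  | succ k ih =>
    rw [Function.iterate_succ, ← Function.comp_assoc]
    refine (ih.comp (isC11With_eulerStep hf s)).mono (by rw [pow_succ, mul_assoc]) ?_
    have one_le : 1 ≤ (1 + s * L) ^ (k + 2) := one_le_pow₀ le_self_add
    calc ((1 + s * L) ^ k) ^ 2 * (B + k * s * K * A) * (1 + s * L) ^ 2 +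
          A * (1 + s * L) ^ k * (s * K)
        ≤ ((1 + s * L) ^ k) ^ 2 * (B + k * s * K * A) * (1 + s * L) ^ 2 +
          A * (1 + s * L) ^ k * (s * K) * (1 + s * L) ^ (k + 2) := 
          add_le_add le_rfl (le_mul_of_one_le_right' one_le)
      _ = ((1 + s * L) ^ (k + 1)) ^ 2 * (B + (k + 1 : ℕ) * s * K * A) := by push_cast; ring

theorem one_add_mul_pow_le_exp {s : ℝ≥0} {k : ℕ} (hk : k * s ≤ T) :
    ((1 + s * L) ^ k : ℝ≥0) ≤ (Real.exp (L * T)).toNNReal := by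
  rw [← NNReal.coe_le_coe, Real.coe_toNNReal _ (Real.exp_nonneg _)]
  push_cast
  calc (1 + s * L : ℝ) ^ k ≤ Real.exp (s * L) ^ k := by
        gcongr
        linarith [Real.add_one_le_exp (s * L : ℝ)]
    _ = Real.exp (L * (k * s : ℝ≥0)) := by rw [← Real.exp_nat_mul]; push_cast; ring_nf
    _ ≤ Real.exp (L * T) := by gcongr

theorem IsC11With.exists_forall_comp_eulerStep_iterate (hh : IsC11With A B h)
    (hf : IsC11With L K f) (T : ℝ≥0) :
    ∃ A' B' : ℝ≥0, ∀ (s : ℝ≥0) (k : ℕ), k * s ≤ T →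
      IsC11With A' B' (h ∘ (eulerStep f s)^[k]) :=
  ⟨A * (Real.exp (L * T)).toNNReal, (Real.exp (L * T)).toNNReal ^ 2 * (B + T * K * A),
    fun s k hk => (hh.comp_eulerStep_iterate hf s k).mono
      (by gcongr; exact one_add_mul_pow_le_exp hk)
      (by gcongr; exact one_add_mul_pow_le_exp hk)⟩

theorem norm_integralCurve_sub_eulerStep_le {u : ℝ → E} {C t : ℝ} {s : ℝ≥0}
    (hf : LipschitzWith L f) (hC : ∀ x, ‖f x‖ ≤ C)
    (hu : IsIntegralCurveOn u (fun _ => f) (Icc t (t + s))) :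
    ‖u (t + s) - eulerStep f s (u t)‖ ≤ L * C * s ^ 2 := by
  have hC0 : 0 ≤ C := (norm_nonneg _).trans (hC 0)
  have moved : ∀ r ∈ Icc t (t + s), ‖u r - u t‖ ≤ C * (r - t) :=
    norm_image_sub_le_of_norm_deriv_le_segment' hu fun _ _ => hC _
  have deviation : ∀ r ∈ Icc t (t + s),
      ‖(u r - r • f (u t)) - (u t - t • f (u t))‖ ≤ L * (C * s) * (r - t) := by
    refine norm_image_sub_le_of_norm_deriv_le_segment' (f' := fun r => f (u r) - f (u t))
      (fun r hr => ?_) fun r hr => ?_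
    · simpa only [one_smul] using
        (hu r hr).fun_sub ((hasDerivAt_id' r).hasDerivWithinAt.smul_const (f (u t)))
    · refine (hf.norm_sub_le _ _).trans ?_
      gcongr
      refine (moved r (Ico_subset_Icc_self hr)).trans ?_
      gcongr
      linarith [hr.2]
  have rearrange : u (t + s) - eulerStep f s (u t) =
      (u (t + s) - (t + s : ℝ) • f (u t)) - (u t - t • f (u t)) := by
    rw [eulerStep, add_smul]
    abel
  rw [rearrange]
  calc _ ≤ L * (C * s) * (t + s - t) := deviation (t + s) ⟨by simp, le_rfl⟩
    _ = L * C * s ^ 2 := by ring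

/-- Telescoping through the points `u (t + k * s)` leaves only one-step errors, each amplified by
the Lipschitz constant of the remaining Euler steps. -/
theorem norm_comp_integralCurve_sub_comp_eulerStep_iterate_le {G : Type*}
    [SeminormedAddCommGroup G] {h : E → G} {u : ℝ → E} {C t : ℝ} {s : ℝ≥0}
    (hf : LipschitzWith L f) (hC : ∀ x, ‖f x‖ ≤ C)
    (hu : IsIntegralCurveOn u (fun _ => f) (Ici t)) (n : ℕ)
    (hh : ∀ k < n, LipschitzWith A (h ∘ (eulerStep f s)^[k])) :
    ‖h (u (t + n * s)) - h ((eulerStep f s)^[n] (u t))‖ ≤ n * (A * (L * C * s ^ 2)) := by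
  induction n generalizing t with
  | zero => simp
  | succ n ih =>
    have later : ‖h (u (t + s + n * s)) - h ((eulerStep f s)^[n] (u (t + s)))‖ ≤
        n * (A * (L * C * s ^ 2)) :=
      ih (hu.mono (Ici_subset_Ici.2 (by simp))) fun k hk => hh k (hk.trans n.lt_succ_self)
    have first : ‖h ((eulerStep f s)^[n] (u (t + s))) -
        h ((eulerStep f s)^[n] (eulerStep f s (u t)))‖ ≤ A * (L * C * s ^ 2) :=
      ((hh n n.lt_succ_self).norm_sub_le _ _).trans <| by
        gcongr
        exact norm_integralCurve_sub_eulerStep_le hf hC (hu.mono Icc_subset_Ici_self)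
    rw [Function.iterate_succ_apply,
      show t + ((n + 1 : ℕ) : ℝ) * s = t + s + n * s by push_cast; ring]
    calc _ ≤ _ := norm_sub_le_norm_sub_add_norm_sub _ _ _
      _ ≤ _ := add_le_add later first
      _ = _ := by push_cast; ring

end EulerScheme

section ApproxInvariant

variable {E : Type*} [NormedAddCommGroup E] [NormedSpace ℝ E] {f : E → E} {S : Finset E}
  {p h : E → ℝ} {a b C : ℝ} {A B L : ℝ≥0}

theorem abs_sum_mul_le_sum_mul_abs {ι : Type*} {s : Finset ι} {w : ι → ℝ}
    (hw : ∀ i ∈ s, 0 ≤ w i) (g : ι → ℝ) : |∑ i ∈ s, w i * g i| ≤ ∑ i ∈ s, w i * |g i| :=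
  (Finset.abs_sum_le_sum_abs _ _).trans_eq <|
    Finset.sum_congr rfl fun i hi => by rw [abs_mul, abs_of_nonneg (hw i hi)]

theorem abs_sum_mul_le_of_sum_eq_one {ι : Type*} {s : Finset ι} {w g : ι → ℝ} {c : ℝ}
    (hw : ∀ i ∈ s, 0 ≤ w i) (hw1 : ∑ i ∈ s, w i = 1) (hg : ∀ i ∈ s, |g i| ≤ c) :
    |∑ i ∈ s, w i * g i| ≤ c :=
  calc |∑ i ∈ s, w i * g i| ≤ ∑ i ∈ s, w i * |g i| := abs_sum_mul_le_sum_mul_abs hw g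
    _ ≤ ∑ i ∈ s, w i * c := by
        gcongr with i hi
        exacts [hw i hi, hg i hi]
    _ = c := by rw [← Finset.sum_mul, hw1, one_mul]

/-- The probability weights `p` on `S` almost annihilate the transport operator `h ↦ Dh · f`, with
an error controlled by the `C^{1,1}` constants of `h`. For `a = b = 0` this is the infinitesimal
form of invariance under the flow of `f`. -/
structure IsApproxInvariant (f : E → E) (S : Finset E) (p : E → ℝ) (a b : ℝ) : Prop where
  nonneg : ∀ x ∈ S, 0 ≤ p x
  sum_eq_one : ∑ x ∈ S, p x = 1
  abs_sum_fderiv_le : ∀ ⦃A B : ℝ≥0⦄ ⦃h : E → ℝ⦄, IsC11With A B h →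
    |∑ x ∈ S, p x * fderiv ℝ h x (f x)| ≤ A * a + B * b

namespace IsApproxInvariant

theorem congr {f' : E → E} (hp : IsApproxInvariant f S p a b) (hf : EqOn f' f S) :
    IsApproxInvariant f' S p a b where
  nonneg := hp.nonneg
  sum_eq_one := hp.sum_eq_one
  abs_sum_fderiv_le A B h hh := by
    rw [Finset.sum_congr rfl fun x hx => by rw [hf hx]]
    exact hp.abs_sum_fderiv_le hh

theorem abs_sum_comp_eulerStep_sub_le (hp : IsApproxInvariant f S p a b)
    (hC : ∀ x, ‖f x‖ ≤ C) (hh : IsC11With A B h) (s : ℝ≥0) :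
    |∑ x ∈ S, p x * h (eulerStep f s x) - ∑ x ∈ S, p x * h x| ≤
      s * (A * a + B * b) + B * (s * C) ^ 2 := by
  let remainder (x : E) : ℝ := h (eulerStep f s x) - h x - s * fderiv ℝ h x (f x)
  have abs_remainder_le (x : E) : |remainder x| ≤ B * (s * C) ^ 2 :=
    calc |remainder x| ≤ B * ‖eulerStep f s x - x‖ ^ 2 := by
          simpa [eulerStep, remainder] using hh.norm_sub_sub_fderiv_le x (eulerStep f s x)
      _ ≤ B * (s * C) ^ 2 := by
          rw [eulerStep, add_sub_cancel_left, norm_smul, NNReal.norm_eq]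
          gcongr
          exact hC x
  have split : ∑ x ∈ S, p x * h (eulerStep f s x) - ∑ x ∈ S, p x * h x =
      s * ∑ x ∈ S, p x * fderiv ℝ h x (f x) + ∑ x ∈ S, p x * remainder x := by
    rw [← Finset.sum_sub_distrib, Finset.mul_sum, ← Finset.sum_add_distrib]
    exact Finset.sum_congr rfl fun x _ => by ring
  rw [split]
  refine (abs_add_le _ _).trans (add_le_add ?_
    (abs_sum_mul_le_of_sum_eq_one hp.nonneg hp.sum_eq_one fun x _ => abs_remainder_le x))
  rw [abs_mul, NNReal.abs_eq]
  gcongr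
  exact hp.abs_sum_fderiv_le hh

theorem abs_sum_comp_eulerStep_iterate_sub_le (hp : IsApproxInvariant f S p a b)
    (hC : ∀ x, ‖f x‖ ≤ C) {s : ℝ≥0} (n : ℕ)
    (hh : ∀ k < n, IsC11With A B (h ∘ (eulerStep f s)^[k])) :
    |∑ x ∈ S, p x * h ((eulerStep f s)^[n] x) - ∑ x ∈ S, p x * h x| ≤
      n * (s * (A * a + B * b) + B * (s * C) ^ 2) := by
  induction n with
  | zero => simp
  | succ n ih =>
    have last_step := hp.abs_sum_comp_eulerStep_sub_le hC (hh n n.lt_succ_self) s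
    have first_steps := ih fun k hk => hh k (hk.trans n.lt_succ_self)
    calc _ ≤ _ := abs_sub_le _ _ _
      _ ≤ _ := add_le_add last_step first_steps
      _ = _ := by push_cast; ring

theorem abs_sum_comp_flow_sub_le_add_div (hp : IsApproxInvariant f S p a b)
    (hf : LipschitzWith L f) (hC : ∀ x, ‖f x‖ ≤ C) {φ : ℝ → E → E} {T : ℝ≥0}
    (hφ₀ : ∀ x ∈ S, φ 0 x = x)
    (hφ : ∀ x ∈ S, IsIntegralCurveOn (φ · x) (fun _ => f) (Ici 0))
    (hh : ∀ (s : ℝ≥0) (k : ℕ), k * s ≤ T → IsC11With A B (h ∘ (eulerStep f s)^[k]))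
    {n : ℕ} (hn : n ≠ 0) :
    |∑ x ∈ S, p x * h (φ T x) - ∑ x ∈ S, p x * h x| ≤
      T * (A * a + B * b) + (A * L * C + B * C ^ 2) * T ^ 2 / n := by
  let s : ℝ≥0 := T / n
  have mul_s : n * s = T := mul_div_cancel₀ T (Nat.cast_ne_zero.2 hn)
  have coe_mul_s : (n : ℝ) * s = T := mod_cast congr_arg NNReal.toReal mul_s
  have hh_lt : ∀ k < n, IsC11With A B (h ∘ (eulerStep f s)^[k]) := fun k hk =>
    hh s k <| by rw [← mul_s]; gcongr
  have scheme_error : |∑ x ∈ S, p x * (h (φ T x) - h ((eulerStep f s)^[n] x))| ≤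
      n * (A * (L * C * s ^ 2)) := by
    refine abs_sum_mul_le_of_sum_eq_one hp.nonneg hp.sum_eq_one fun x hx => ?_
    have := norm_comp_integralCurve_sub_comp_eulerStep_iterate_le hf hC (hφ x hx) n
      fun k hk => (hh_lt k hk).lipschitzWith
    rwa [zero_add, coe_mul_s, hφ₀ x hx, Real.norm_eq_abs] at this
  have mean_drift := hp.abs_sum_comp_eulerStep_iterate_sub_le hC n hh_lt
  simp only [mul_sub, Finset.sum_sub_distrib] at scheme_error
  calc _ ≤ _ := abs_sub_le _ _ _
    _ ≤ _ := add_le_add scheme_error mean_drift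
    _ = _ := by rw [← coe_mul_s]; field_simp; ring

theorem abs_sum_comp_flow_sub_le (hp : IsApproxInvariant f S p a b)
    (hf : LipschitzWith L f) (hC : ∀ x, ‖f x‖ ≤ C) {φ : ℝ → E → E} {T : ℝ≥0}
    (hφ₀ : ∀ x ∈ S, φ 0 x = x)
    (hφ : ∀ x ∈ S, IsIntegralCurveOn (φ · x) (fun _ => f) (Ici 0))
    (hh : ∀ (s : ℝ≥0) (k : ℕ), k * s ≤ T → IsC11With A B (h ∘ (eulerStep f s)^[k])) :
    |∑ x ∈ S, p x * h (φ T x) - ∑ x ∈ S, p x * h x| ≤ T * (A * a + B * b) := by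
  have bound_tendsto : Tendsto (fun n : ℕ => T * (A * a + B * b) +
      (A * L * C + B * C ^ 2) * T ^ 2 / n) atTop (𝓝 (T * (A * a + B * b))) := by
    simpa only [add_zero] using tendsto_const_nhds.add
      (tendsto_const_div_atTop_nhds_zero_nat ((A * L * C + B * C ^ 2) * T ^ 2))
  refine ge_of_tendsto bound_tendsto ?_
  filter_upwards [eventually_ne_atTop 0] with n hn
  exact hp.abs_sum_comp_flow_sub_le_add_div hf hC hφ₀ hφ hh hn

end IsApproxInvariant

end ApproxInvariant

section MarkovChain

variable {E : Type*} [NormedAddCommGroup E] [NormedSpace ℝ E] {f : E → E} {S : Finset E}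
  {r : E → E → ℝ} {p h : E → ℝ} {A B : ℝ≥0}

/-- The generator of the Markov chain on `S` with jump rates `r`. The diagonal rates, on which it
does not depend, are kept in the sum. -/
def jumpGenerator (S : Finset E) (r : E → E → ℝ) (h : E → ℝ) (x : E) : ℝ :=
  ∑ y ∈ S, r x y * (h y - h x)

/-- The drift of the Markov chain on `S` with jump rates `r`: the expected displacement per unit of
time out of `x`. -/
def jumpDrift (S : Finset E) (r : E → E → ℝ) (x : E) : E :=
  ∑ y ∈ S, r x y • (y - x)

/-- The expected squared displacement per unit of time out of `x` of the Markov chain on `S` with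
jump rates `r`. -/
def jumpSecondMoment (S : Finset E) (r : E → E → ℝ) (x : E) : ℝ :=
  ∑ y ∈ S, r x y * ‖y - x‖ ^ 2

/-- The weights `p` form a stationary distribution of the Markov chain on `S` with jump rates
`r`. -/
structure IsStationaryDistribution (S : Finset E) (r : E → E → ℝ) (p : E → ℝ) : Prop where
  nonneg : ∀ x ∈ S, 0 ≤ p x
  sum_eq_one : ∑ x ∈ S, p x = 1
  sum_jumpGenerator : ∀ h : E → ℝ, ∑ x ∈ S, p x * jumpGenerator S r h x = 0

theorem abs_jumpGenerator_sub_fderiv_jumpDrift_le {x : E} (hr : ∀ y ∈ S, 0 ≤ r x y)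
    (hh : IsC11With A B h) :
    |jumpGenerator S r h x - fderiv ℝ h x (jumpDrift S r x)| ≤ B * jumpSecondMoment S r x := by
  simp only [jumpGenerator, jumpDrift, jumpSecondMoment, map_sum, map_smul, smul_eq_mul,
    ← Finset.sum_sub_distrib, ← mul_sub, Finset.mul_sum]
  refine (Finset.abs_sum_le_sum_abs _ _).trans (Finset.sum_le_sum fun y hy => ?_)
  rw [abs_mul, abs_of_nonneg (hr y hy), mul_left_comm]
  exact mul_le_mul_of_nonneg_left (hh.norm_sub_sub_fderiv_le x y) (hr y hy)

theorem abs_fderiv_sub_jumpGenerator_le {x : E} (hr : ∀ y ∈ S, 0 ≤ r x y)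
    (hh : IsC11With A B h) :
    |fderiv ℝ h x (f x) - jumpGenerator S r h x| ≤
      A * ‖f x - jumpDrift S r x‖ + B * jumpSecondMoment S r x := by
  have drift_error :
      |fderiv ℝ h x (f x) - fderiv ℝ h x (jumpDrift S r x)| ≤ A * ‖f x - jumpDrift S r x‖ := by
    rw [← map_sub]
    exact (fderiv ℝ h x).le_of_opNorm_le (hh.norm_fderiv_le x) _
  refine (abs_sub_le _ _ _).trans (add_le_add drift_error ?_)
  rw [abs_sub_comm]
  exact abs_jumpGenerator_sub_fderiv_jumpDrift_le hr hh

theorem IsStationaryDistribution.isApproxInvariant (hp : IsStationaryDistribution S r p)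
    (hr : ∀ x ∈ S, ∀ y ∈ S, 0 ≤ r x y) (f : E → E) :
    IsApproxInvariant f S p (∑ x ∈ S, p x * ‖f x - jumpDrift S r x‖)
      (∑ x ∈ S, p x * jumpSecondMoment S r x) where
  nonneg := hp.nonneg
  sum_eq_one := hp.sum_eq_one
  abs_sum_fderiv_le A B h hh :=
    calc |∑ x ∈ S, p x * fderiv ℝ h x (f x)|
        = |∑ x ∈ S, p x * (fderiv ℝ h x (f x) - jumpGenerator S r h x)| := by
          simp only [mul_sub, Finset.sum_sub_distrib, hp.sum_jumpGenerator, sub_zero]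
      _ ≤ ∑ x ∈ S, p x * |fderiv ℝ h x (f x) - jumpGenerator S r h x| :=
          abs_sum_mul_le_sum_mul_abs hp.nonneg _
      _ ≤ ∑ x ∈ S, p x * (A * ‖f x - jumpDrift S r x‖ + B * jumpSecondMoment S r x) := by
          gcongr with x hx
          exacts [hp.nonneg x hx, abs_fderiv_sub_jumpGenerator_le (hr x hx) hh]
      _ = _ := by
          simp only [mul_add, Finset.sum_add_distrib, Finset.mul_sum, mul_left_comm]

end MarkovChain

section Birkhoff

variable {α : Type*} {θ : α → α} {g : α → ℝ} {K : Set α} {c : ℝ}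

theorem birkhoffSum_le_mul_of_forall_le (hθ : MapsTo θ K K) (hg : ∀ x ∈ K, g x ≤ c) (n : ℕ)
    {x : α} (hx : x ∈ K) : birkhoffSum θ g n x ≤ n * c :=
  (Finset.sum_le_card_nsmul _ _ c fun k _ => hg _ (hθ.iterate k hx)).trans_eq <| by simp

/-- Cut the orbit greedily into blocks of length at most `N` whose average is at most `c`; only the
unfinished last block contributes the error `N * R`. -/
theorem birkhoffSum_le_of_forall_exists_le {N : ℕ} {R : ℝ} (hθ : MapsTo θ K K) (hR : 0 ≤ R)
    (hg : ∀ x ∈ K, g x ≤ c + R)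
    (hN : ∀ x ∈ K, ∃ n ≠ 0, n ≤ N ∧ birkhoffSum θ g n x ≤ n * c) (k : ℕ) {x : α} (hx : x ∈ K) :
    birkhoffSum θ g k x ≤ k * c + N * R := by
  induction k using Nat.strong_induction_on generalizing x with
  | _ k ih =>
    rcases le_or_gt k N with hkN | hNk
    · calc birkhoffSum θ g k x ≤ k * (c + R) := birkhoffSum_le_mul_of_forall_le hθ hg k hx
        _ ≤ k * c + N * R := by rw [mul_add]; gcongr
    · obtain ⟨n, hn0, hnN, block⟩ := hN x hx
      obtain ⟨m, rfl⟩ := Nat.exists_eq_add_of_le (hnN.trans hNk.le)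
      have rest := ih m (by lia) (hθ.iterate n hx)
      calc birkhoffSum θ g (n + m) x
          = birkhoffSum θ g n x + birkhoffSum θ g m (θ^[n] x) := birkhoffSum_add θ g n m x
        _ ≤ n * c + (m * c + N * R) := add_le_add block rest
        _ = (n + m : ℕ) * c + N * R := by push_cast; ring

variable [TopologicalSpace α]

theorem continuousOn_birkhoffSum (hθ : ContinuousOn θ K) (hθK : MapsTo θ K K)
    (hg : ContinuousOn g K) (n : ℕ) : ContinuousOn (birkhoffSum θ g n) K :=
  continuousOn_finsetSum _ fun k _ => hg.comp (hθ.iterate hθK k) (hθK.iterate k)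

theorem exists_forall_exists_birkhoffSum_le (hK : IsCompact K) (hθ : ContinuousOn θ K)
    (hθK : MapsTo θ K K) (hg : ContinuousOn g K)
    (hc : ∀ x ∈ K, ∃ n ≠ 0, birkhoffSum θ g n x < n * c) :
    ∃ N : ℕ, ∀ x ∈ K, ∃ n ≠ 0, n ≤ N ∧ birkhoffSum θ g n x ≤ n * c := by
  refine hK.induction_on (p := fun s => ∃ N : ℕ, ∀ x ∈ s, ∃ n ≠ 0, n ≤ N ∧
    birkhoffSum θ g n x ≤ n * c) ⟨0, by simp⟩ ?_ ?_ ?_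
  · exact fun s t hst ⟨N, hN⟩ => ⟨N, fun x hx => hN x (hst hx)⟩
  · rintro s t ⟨N, hN⟩ ⟨N', hN'⟩
    refine ⟨max N N', fun x hx => ?_⟩
    rcases hx with hx | hx
    · obtain ⟨n, hn0, hn, hle⟩ := hN x hx
      exact ⟨n, hn0, le_max_of_le_left hn, hle⟩
    · obtain ⟨n, hn0, hn, hle⟩ := hN' x hx
      exact ⟨n, hn0, le_max_of_le_right hn, hle⟩
  · intro x hx
    obtain ⟨n, hn0, hlt⟩ := hc x hx
    have nearby : ∀ᶠ y in 𝓝[K] x, birkhoffSum θ g n y < n * c :=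
      (continuousOn_birkhoffSum hθ hθK hg n x hx).eventually_lt_const hlt
    exact ⟨_, nearby, n, fun y hy => ⟨n, hn0, le_rfl, le_of_lt hy⟩⟩

theorem eventually_forall_birkhoffAverage_lt (hK : IsCompact K) (hθ : ContinuousOn θ K)
    (hθK : MapsTo θ K K) (hg : ContinuousOn g K)
    (hc : ∀ x ∈ K, ∃ n ≠ 0, birkhoffAverage ℝ θ g n x < c) {c' : ℝ} (hcc' : c < c') :
    ∀ᶠ n in atTop, ∀ x ∈ K, birkhoffAverage ℝ θ g n x < c' := by
  have average_lt_iff {n : ℕ} (hn : n ≠ 0) (x : α) (d : ℝ) :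
      birkhoffAverage ℝ θ g n x < d ↔ birkhoffSum θ g n x < n * d :=
    inv_smul_lt_iff_of_pos (Nat.cast_pos.2 (Nat.pos_of_ne_zero hn))
  obtain ⟨N, hN⟩ := exists_forall_exists_birkhoffSum_le hK hθ hθK hg fun x hx =>
    (hc x hx).imp fun n hn => ⟨hn.1, (average_lt_iff hn.1 x c).1 hn.2⟩
  obtain ⟨m, hm⟩ := hK.bddAbove_image hg
  have g_le : ∀ x ∈ K, g x ≤ c + max (m - c) 0 := fun x hx =>
    (hm (mem_image_of_mem g hx)).trans (sub_le_iff_le_add'.1 (le_max_left _ _))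
  have error_lt : ∀ᶠ n : ℕ in atTop, N * max (m - c) 0 < n * (c' - c) :=
    (tendsto_natCast_atTop_atTop.atTop_mul_const (sub_pos.2 hcc')).eventually_gt_atTop _
  filter_upwards [error_lt, eventually_ne_atTop 0] with n hn hn0 x hx
  rw [average_lt_iff hn0]
  have := birkhoffSum_le_of_forall_exists_le hθK (le_max_right (m - c) 0) g_le hN n hx
  linarith

end Birkhoff

section Semiflow

variable {E : Type*} [NormedAddCommGroup E] [NormedSpace ℝ E] {f : E → E} {φ : ℝ → E → E}
  {D : Set E} {L : ℝ≥0}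

theorem dist_integralCurve_le {u v : ℝ → E} (hf : LipschitzOnWith L f D)
    (hu : IsIntegralCurveOn u (fun _ => f) (Ici 0)) (huD : MapsTo u (Ici 0) D)
    (hv : IsIntegralCurveOn v (fun _ => f) (Ici 0)) (hvD : MapsTo v (Ici 0) D)
    {t : ℝ} (ht : 0 ≤ t) : dist (u t) (v t) ≤ dist (u 0) (v 0) * Real.exp (L * t) := by
  have right_deriv {w : ℝ → E} (hw : IsIntegralCurveOn w (fun _ => f) (Ici 0)) :
      ∀ s ∈ Ico 0 t, HasDerivWithinAt w (f (w s)) (Ici s) s := fun s hs =>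
    (hw s hs.1).mono (Ici_subset_Ici.2 hs.1)
  simpa only [sub_zero] using dist_le_of_trajectories_ODE_of_mem (fun _ _ => hf)
    (hu.continuousOn.mono Icc_subset_Ici_self) (right_deriv hu) (fun _ hs => huD hs.1)
    (hv.continuousOn.mono Icc_subset_Ici_self) (right_deriv hv) (fun _ hs => hvD hs.1)
    le_rfl t ⟨ht, le_rfl⟩

/-- A semiflow of `ẋ = f x` on `D`: every point of `D` starts a solution that stays in `D` for all
nonnegative times. The semigroup law is not a field, since it follows from uniqueness. -/
structure IsSemiflowOn (f : E → E) (φ : ℝ → E → E) (D : Set E) : Prop where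
  map_zero : ∀ x ∈ D, φ 0 x = x
  mapsTo : ∀ t, 0 ≤ t → MapsTo (φ t) D D
  isIntegralCurveOn : ∀ x ∈ D, IsIntegralCurveOn (φ · x) (fun _ => f) (Ici 0)

namespace IsSemiflowOn

theorem congr {f' : E → E} (hφ : IsSemiflowOn f φ D) (hf : EqOn f' f D) :
    IsSemiflowOn f' φ D where
  map_zero := hφ.map_zero
  mapsTo := hφ.mapsTo
  isIntegralCurveOn x hx t ht := by
    simpa only [hf (hφ.mapsTo t ht hx)] using hφ.isIntegralCurveOn x hx t ht

theorem continuousOn (hφ : IsSemiflowOn f φ D) (hf : LipschitzOnWith L f D) {t : ℝ}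
    (ht : 0 ≤ t) : ContinuousOn (φ t) D := by
  refine (LipschitzOnWith.of_dist_le_mul (K := (Real.exp (L * t)).toNNReal)
    fun x hx y hy => ?_).continuousOn
  have gronwall := dist_integralCurve_le hf (hφ.isIntegralCurveOn x hx)
    (fun s hs => hφ.mapsTo s hs hx) (hφ.isIntegralCurveOn y hy) (fun s hs => hφ.mapsTo s hs hy) ht
  rwa [hφ.map_zero x hx, hφ.map_zero y hy, mul_comm,
    ← Real.coe_toNNReal _ (Real.exp_nonneg _)] at gronwall

theorem map_add (hφ : IsSemiflowOn f φ D) (hf : LipschitzOnWith L f D) {s t : ℝ} (hs : 0 ≤ s)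
    (ht : 0 ≤ t) {x : E} (hx : x ∈ D) : φ (t + s) x = φ t (φ s x) := by
  have shifted : IsIntegralCurveOn (fun t => φ (t + s) x) (fun _ => f) (Ici 0) := by
    have := (hφ.isIntegralCurveOn x hx).comp_add s
    refine this.mono fun t ht => ?_
    simpa [mem_vadd_set_iff_neg_vadd_mem] using add_nonneg hs ht
  have hsx := hφ.mapsTo s hs hx
  have gronwall := dist_integralCurve_le hf shifted
    (fun r hr => hφ.mapsTo (r + s) (add_nonneg hr hs) hx) (hφ.isIntegralCurveOn _ hsx)
    (fun r hr => hφ.mapsTo r hr hsx) ht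
  simpa [hφ.map_zero _ hsx] using gronwall

theorem iterate_one_eq (hφ : IsSemiflowOn f φ D) (hf : LipschitzOnWith L f D) (k : ℕ) :
    EqOn (φ 1)^[k] (φ k) D := by
  induction k with
  | zero => exact fun x hx => by simp [hφ.map_zero x hx]
  | succ k ih =>
    intro x hx
    rw [Function.iterate_succ_apply, ih (hφ.mapsTo 1 zero_le_one hx),
      ← hφ.map_add hf zero_le_one k.cast_nonneg hx, Nat.cast_succ]

theorem exists_forall_birkhoffAverage_lt {h : E → ℝ} {xstar : E} {c : ℝ}
    (hφ : IsSemiflowOn f φ D) (hD : IsCompact D) (hf : LipschitzOnWith L f D)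
    (hattract : ∀ x ∈ D, Tendsto (φ · x) atTop (𝓝 xstar)) (hh : Continuous h)
    (hc : h xstar < c) : ∃ n ≠ 0, ∀ x ∈ D, birkhoffAverage ℝ (φ 1) h n x < c := by
  obtain ⟨c₀, hc₀, hc₀c⟩ := exists_between hc
  have average_tendsto : ∀ x ∈ D,
      Tendsto (fun n => birkhoffAverage ℝ (φ 1) h n x) atTop (𝓝 (h xstar)) := fun x hx => by
    refine Tendsto.cesaro_smul ?_
    simp only [hφ.iterate_one_eq hf _ hx]
    exact (hh.tendsto xstar).comp ((hattract x hx).comp tendsto_natCast_atTop_atTop)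
  have pointwise : ∀ x ∈ D, ∃ n ≠ 0, birkhoffAverage ℝ (φ 1) h n x < c₀ := fun x hx =>
    ((eventually_ne_atTop 0).and ((average_tendsto x hx).eventually_lt_const hc₀)).exists
  exact ((eventually_ne_atTop 0).and (eventually_forall_birkhoffAverage_lt hD
    (hφ.continuousOn hf zero_le_one) (hφ.mapsTo 1 zero_le_one) hh.continuousOn pointwise
    hc₀c)).exists

end IsSemiflowOn

end Semiflow

section Concentration

variable {E : Type*} [NormedAddCommGroup E] [NormedSpace ℝ E] {ι : Type*}
  {l : Filter ι} {D : Set E} {f : E → E} {φ : ℝ → E → E} {S : ι → Finset E} {p : ι → E → ℝ}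
  {h : E → ℝ} {xstar : E} {c : ℝ}

/-- Probability weights `p i` on finite subsets `S i` of `D` whose defects of invariance under the
flow of `f` vanish along `l`. -/
structure IsAsymptoticallyInvariantOn (l : Filter ι) (D : Set E) (f : E → E) (S : ι → Finset E)
    (p : ι → E → ℝ) : Prop where
  eventually_mem : ∀ᶠ i in l, ∀ x ∈ S i, x ∈ D
  exists_isApproxInvariant : ∃ a b : ι → ℝ, Tendsto a l (𝓝 0) ∧ Tendsto b l (𝓝 0) ∧
    ∀ᶠ i in l, IsApproxInvariant f (S i) (p i) (a i) (b i)

namespace IsAsymptoticallyInvariantOn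

variable [FiniteDimensional ℝ E]

theorem tendsto_sum_comp_semiflow_sub (hp : IsAsymptoticallyInvariantOn l D f S p)
    (hD : IsCompact D) (hf : ContDiff ℝ 2 f) (hφ : IsSemiflowOn f φ D) (hh : ContDiff ℝ 2 h)
    (t : ℝ≥0) :
    Tendsto (fun i => ∑ x ∈ S i, p i x * h (φ t x) - ∑ x ∈ S i, p i x * h x) l (𝓝 0) := by
  obtain ⟨a, b, ha, hb, hpab⟩ := hp.exists_isApproxInvariant
  obtain ⟨L, K, C, F, hF, hC, hFf⟩ := IsC11With.exists_eqOn_of_isCompact hD hf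
  obtain ⟨A₀, B₀, -, H, hH, -, hHh⟩ := IsC11With.exists_eqOn_of_isCompact hD hh
  obtain ⟨A, B, hAB⟩ := hH.exists_forall_comp_eulerStep_iterate hF t
  have hφF := hφ.congr hFf
  have bound_tendsto : Tendsto (fun i => t * (A * a i + B * b i)) l (𝓝 0) := by
    simpa using ((ha.const_mul (A : ℝ)).add (hb.const_mul (B : ℝ))).const_mul (t : ℝ)
  refine squeeze_zero_norm' ?_ bound_tendsto
  filter_upwards [hp.eventually_mem, hpab] with i hSi hpi
  have sum_flow_eq : ∑ x ∈ S i, p i x * H (φ t x) = ∑ x ∈ S i, p i x * h (φ t x) :=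
    Finset.sum_congr rfl fun x hx => by rw [hHh (hφ.mapsTo t t.2 (hSi x hx))]
  have sum_eq : ∑ x ∈ S i, p i x * H x = ∑ x ∈ S i, p i x * h x :=
    Finset.sum_congr rfl fun x hx => by rw [hHh (hSi x hx)]
  rw [← sum_flow_eq, ← sum_eq]
  exact (hpi.congr fun x hx => hFf (hSi x hx)).abs_sum_comp_flow_sub_le hF.lipschitzWith hC
    (fun x hx => hφF.map_zero x (hSi x hx)) (fun x hx => hφF.isIntegralCurveOn x (hSi x hx)) hAB

theorem tendsto_sum_birkhoffAverage_sub (hp : IsAsymptoticallyInvariantOn l D f S p)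
    (hD : IsCompact D) (hf : ContDiff ℝ 2 f) (hφ : IsSemiflowOn f φ D) (hh : ContDiff ℝ 2 h)
    {n : ℕ} (hn : n ≠ 0) :
    Tendsto (fun i => ∑ x ∈ S i, p i x * birkhoffAverage ℝ (φ 1) h n x - ∑ x ∈ S i, p i x * h x)
      l (𝓝 0) := by
  obtain ⟨L, hL⟩ := (hf.of_le one_le_two).locallyLipschitz.locallyLipschitzOn
    |>.exists_lipschitzOnWith_of_compact hD
  have average_tendsto : Tendsto (fun i => (n : ℝ)⁻¹ * ∑ k ∈ Finset.range n,
      (∑ x ∈ S i, p i x * h (φ k x) - ∑ x ∈ S i, p i x * h x)) l (𝓝 0) := by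
    simpa using (tendsto_finsetSum (Finset.range n) fun k _ =>
      hp.tendsto_sum_comp_semiflow_sub hD hf hφ hh k).const_mul (n : ℝ)⁻¹
  refine average_tendsto.congr' ?_
  filter_upwards [hp.eventually_mem] with i hSi
  have average_eq : ∀ x ∈ S i, p i x * birkhoffAverage ℝ (φ 1) h n x =
      (n : ℝ)⁻¹ * ∑ k ∈ Finset.range n, p i x * h (φ k x) := fun x hx => by
    simp only [birkhoffAverage, birkhoffSum, smul_eq_mul, hφ.iterate_one_eq hL _ (hSi x hx),
      ← Finset.mul_sum, mul_left_comm]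
  rw [Finset.sum_congr rfl average_eq, ← Finset.mul_sum, Finset.sum_comm, Finset.sum_sub_distrib,
    Finset.sum_const, Finset.card_range, nsmul_eq_mul, mul_sub,
    inv_mul_cancel_left₀ (Nat.cast_ne_zero.2 hn)]

theorem eventually_sum_mul_lt (hp : IsAsymptoticallyInvariantOn l D f S p)
    (hD : IsCompact D) (hf : ContDiff ℝ 2 f) (hφ : IsSemiflowOn f φ D)
    (hattract : ∀ x ∈ D, Tendsto (φ · x) atTop (𝓝 xstar)) (hh : ContDiff ℝ 2 h)
    (hc : h xstar < c) : ∀ᶠ i in l, ∑ x ∈ S i, p i x * h x < c := by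
  obtain ⟨_, _, -, -, hpab⟩ := hp.exists_isApproxInvariant
  obtain ⟨L, hL⟩ := (hf.of_le one_le_two).locallyLipschitz.locallyLipschitzOn
    |>.exists_lipschitzOnWith_of_compact hD
  obtain ⟨c₀, hc₀, hc₀c⟩ := exists_between hc
  obtain ⟨n, hn, average_lt⟩ :=
    hφ.exists_forall_birkhoffAverage_lt hD hL hattract hh.continuous hc₀
  have difference_gt := (hp.tendsto_sum_birkhoffAverage_sub hD hf hφ hh hn)
    |>.eventually_const_lt (sub_neg.2 hc₀c)
  filter_upwards [hp.eventually_mem, hpab, difference_gt] with i hSi hpi hi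
  have mean_average_le : ∑ x ∈ S i, p i x * birkhoffAverage ℝ (φ 1) h n x ≤ c₀ :=
    calc _ ≤ ∑ x ∈ S i, p i x * c₀ := by
          gcongr with x hx
          exacts [hpi.nonneg x hx, (average_lt x (hSi x hx)).le]
      _ = c₀ := by rw [← Finset.sum_mul, hpi.sum_eq_one, one_mul]
  linarith

theorem tendsto_sum_mul (hp : IsAsymptoticallyInvariantOn l D f S p)
    (hD : IsCompact D) (hf : ContDiff ℝ 2 f) (hφ : IsSemiflowOn f φ D)
    (hattract : ∀ x ∈ D, Tendsto (φ · x) atTop (𝓝 xstar)) (hh : ContDiff ℝ 2 h) :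
    Tendsto (fun i => ∑ x ∈ S i, p i x * h x) l (𝓝 (h xstar)) := by
  refine tendsto_order.2 ⟨fun c hc => ?_, fun c hc =>
    hp.eventually_sum_mul_lt hD hf hφ hattract hh hc⟩
  filter_upwards [hp.eventually_sum_mul_lt hD hf hφ hattract hh.neg (neg_lt_neg hc)] with i hi
  simpa only [mul_neg, Finset.sum_neg_distrib, neg_lt_neg_iff] using hi

end IsAsymptoticallyInvariantOn

end Concentration

section NormalizedRates

theorem jumpGenerator_eq_sum_erase {E : Type*} [DecidableEq E] (S : Finset E) (r : E → E → ℝ)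
    (h : E → ℝ) (x : E) : jumpGenerator S r h x = ∑ y ∈ S.erase x, r x y * (h y - h x) :=
  (Finset.sum_erase S (by simp)).symm

variable {E : Type*} [NormedAddCommGroup E] [DecidableEq E]

theorem jumpSecondMoment_eq_sum_erase (S : Finset E) (r : E → E → ℝ) (x : E) :
    jumpSecondMoment S r x = ∑ y ∈ S.erase x, r x y * ‖y - x‖ ^ 2 :=
  (Finset.sum_erase S (by simp)).symm

theorem jumpDrift_const_mul [NormedSpace ℝ E] (S : Finset E) (c : ℝ) (q : E → E → ℝ) (x : E) :
    jumpDrift S (fun x y => c * q x y) x = c • ∑ y ∈ S.erase x, q x y • (y - x) := by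
  rw [Finset.sum_erase S (by simp), Finset.smul_sum]
  simp only [jumpDrift, mul_smul]

end NormalizedRates

theorem meanfield_convergence_asymptotically_accurate_general
    {E : Type*} [NormedAddCommGroup E] [InnerProductSpace ℝ E] [FiniteDimensional ℝ E]
    {ι : Type*} {l : Filter ι} {D : Set E} {f : E → E} {φ : ℝ → E → E} {xstar : E}
    {S : ι → Finset E} {r : ι → E → E → ℝ} {p : ι → E → ℝ}
    (hD : IsCompact D) (hf : ContDiff ℝ 2 f) (hφ : IsSemiflowOn f φ D)
    (hattract : ∀ x ∈ D, Tendsto (φ · x) atTop (𝓝 xstar))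
    (hS : ∀ᶠ i in l, ∀ x ∈ S i, x ∈ D)
    (hr : ∀ᶠ i in l, ∀ x ∈ S i, ∀ y ∈ S i, 0 ≤ r i x y)
    (hp : ∀ᶠ i in l, IsStationaryDistribution (S i) (r i) (p i))
    (haccurate : Tendsto (fun i => ∑ x ∈ S i, p i x * ‖f x - jumpDrift (S i) (r i) x‖) l (𝓝 0))
    (hsecond : Tendsto (fun i => ∑ x ∈ S i, p i x * jumpSecondMoment (S i) (r i) x) l (𝓝 0)) :
    Tendsto (fun i => ∑ x ∈ S i, p i x * ‖x - xstar‖ ^ 2) l (𝓝 0) := by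
  have invariant : IsAsymptoticallyInvariantOn l D f S p :=
    ⟨hS, _, _, haccurate, hsecond, (hr.and hp).mono fun i hi => hi.2.isApproxInvariant hi.1 f⟩
  have square_contDiff : ContDiff ℝ 2 fun x : E => ‖x - xstar‖ ^ 2 :=
    (contDiff_id.sub contDiff_const).norm_sq ℝ
  simpa using invariant.tendsto_sum_mul hD hf hφ hattract square_contDiff

end MeanField

/-- If the mean-field model is asymptotically accurate (instead of perfect),
with vanishing second-moment of jumps and vanishing jump sizes, and the mean-field model is
globally asymptotically stable and locally exponentially stable, then the stationary
distributions converge in the mean-square sense to the equilibrium point. -/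
theorem meanfield_convergence_asymptotically_accurate
    (n : ℕ) (hn : 1 ≤ n)
    (D : Set (EuclideanSpace ℝ (Fin n)))
    (hDcompact : IsCompact D)
    (hDsub : ∀ x ∈ D, ∀ i, x i ∈ Set.Icc (0 : ℝ) 1)
    (f : EuclideanSpace ℝ (Fin n) → EuclideanSpace ℝ (Fin n))
    (hf : ContDiff ℝ 2 f)
    (φ : ℝ → EuclideanSpace ℝ (Fin n) → EuclideanSpace ℝ (Fin n))
    (hφ0 : ∀ x ∈ D, φ 0 x = x)
    (hφD : ∀ x ∈ D, ∀ t : ℝ, 0 ≤ t → φ t x ∈ D)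
    (hφderiv : ∀ x ∈ D, ∀ t : ℝ, 0 ≤ t →
      HasDerivAt (fun s => φ s x) (f (φ t x)) t)
    (xstar : EuclideanSpace ℝ (Fin n)) (hxstarD : xstar ∈ D)
    (hfix : f xstar = 0)
    (huniq : ∀ x ∈ D, f x = 0 → x = xstar)
    -- global asymptotic stability
    (hGAS : ∀ x ∈ D, Tendsto (fun t => φ t x) atTop (nhds xstar))
    -- local exponential stability
    (hLES : ∃ ε > (0 : ℝ), ∃ κ > (0 : ℝ), ∃ a > (0 : ℝ), ∀ x ∈ D, ‖x - xstar‖ ≤ ε →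
      ∀ t : ℝ, 0 ≤ t → ‖φ t x - xstar‖ ≤ κ * ‖x - xstar‖ * Real.exp (-a * t))
    -- the family of CTMCs
    (S : ℕ → Finset (EuclideanSpace ℝ (Fin n)))
    (hS : ∀ M ≥ 1, ∀ x ∈ S M, x ∈ D)
    (q : ℕ → EuclideanSpace ℝ (Fin n) → EuclideanSpace ℝ (Fin n) → ℝ)
    (hq0 : ∀ M ≥ 1, ∀ x y, 0 ≤ q M x y)
    (hqdiag : ∀ M ≥ 1, ∀ x, q M x x = 0)
    (pr : ℕ → EuclideanSpace ℝ (Fin n) → ℝ)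
    (hpr01 : ∀ M ≥ 1, ∀ x ∈ S M, 0 ≤ pr M x ∧ pr M x ≤ 1)
    (hpr1 : ∀ M ≥ 1, ∑ x ∈ S M, pr M x = 1)
    -- stationarity for the CTMC with rates `Q_M(x,y) = M q_M(x,y)`
    (hstat : ∀ M ≥ 1, ∀ h : EuclideanSpace ℝ (Fin n) → ℝ,
      ∑ x ∈ S M, pr M x * ∑ y ∈ (S M).erase x, (M : ℝ) * q M x y * (h y - h x) = 0)
    -- (i) asymptotic accuracy of the mean-field model
    (haccurate : Tendsto (fun M : ℕ =>
        ∑ x ∈ S M, pr M x *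
          ‖f x - (M : ℝ) • ∑ y ∈ (S M).erase x, q M x y • (y - x)‖)
      atTop (nhds 0))
    -- (ii) vanishing expected second moment of the jumps
    (hsecond : Tendsto (fun M : ℕ =>
        ∑ x ∈ S M, pr M x * ∑ y ∈ (S M).erase x, q M x y * (M : ℝ) * ‖y - x‖ ^ 2)
      atTop (nhds 0))
    -- (iii) vanishing jump sizes
    (hjump : ∀ δ > (0 : ℝ), ∃ M₀ : ℕ, ∀ M ≥ M₀, ∀ x ∈ S M, ∀ y ∈ S M,
      0 < q M x y → ‖y - x‖ ≤ δ) :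
    Tendsto (fun M : ℕ => ∑ x ∈ S M, pr M x * ‖x - xstar‖ ^ 2) atTop (nhds 0) := by
  
  have eventually_pos : ∀ᶠ M : ℕ in atTop, 1 ≤ M := eventually_ge_atTop 1
  exact meanfield_convergence_asymptotically_accurate_general
    (r := fun M x y => M * q M x y) hDcompact hf
    ⟨hφ0, fun t ht x hx => hφD x hx t ht, fun x hx t ht => (hφderiv x hx t ht).hasDerivWithinAt⟩
    hGAS (eventually_pos.mono hS)
    (eventually_pos.mono fun M hM x _ y _ => mul_nonneg M.cast_nonneg (hq0 M hM x y))
    (eventually_pos.mono fun M hM => ⟨fun x hx => (hpr01 M hM x hx).1, hpr1 M hM, by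
      simpa only [jumpGenerator_eq_sum_erase] using hstat M hM⟩)
    (by simpa only [jumpDrift_const_mul] using haccurate)
    (by simpa only [jumpSecondMoment_eq_sum_erase, mul_comm (Nat.cast _ : ℝ)] using hsecond)
end

section
/- Let f : ℝ^n → ℝ^n have f(0) = 0 and Jacobian Df Lipschitz with constant L (in operator norm), let P be a real symmetric positive definite n×n matrix with smallest and largest eigenvalues λ_min(P), λ_max(P) satisfying 2 yᵀP·Df(0)·y ≤ −‖y‖² for all y ∈ ℝ^n, let x⁰ : [0,∞) → ℝ^n be a solution of ẋ⁰ = f(x⁰), and let x¹ : [0,∞) → ℝ^n solve the variational system ẋ¹(t) = Df(x⁰(t))·x¹(t). Define V(t) := x¹(t)ᵀP·x¹(t). Then V satisfies the differential inequality: for all t ≥ 0, dV/dt(t) ≤ ( −1/λ_max(P) + (2λ_max(P)/λ_min(P))·L·‖x⁰(t)‖ )·V(t). -/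
open Filter MeasureTheory Matrix

/-!
Since `P` is symmetric, `V̇ = 2 ⟪x¹, P (A x¹)⟫` with `A = Df(x⁰)`. Split `A = A₀ + (A - A₀)` with
`A₀ = Df(0)`. The Lyapunov condition bounds the first part by `-‖x¹‖²`, and Cauchy–Schwarz bounds
the second by `2 ‖P‖ ‖A - A₀‖ ‖x¹‖²`, where `‖P‖ = λ_max` and `‖A - A₀‖ ≤ L ‖x⁰‖`. Comparing
`‖x¹‖²` with `V` through `λ_min ‖x¹‖² ≤ V ≤ λ_max ‖x¹‖²` gives the estimate.
-/

open scoped RealInnerProductSpace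

lemma norm_eq_of_isGreatest_range {ι : Type*} [Fintype ι] {g : ι → ℝ} (hg : ∀ i, 0 ≤ g i) {c : ℝ}
    (hc : IsGreatest (Set.range g) c) : ‖g‖ = c := by
  obtain ⟨⟨i, rfl⟩, hi⟩ := hc
  refine le_antisymm ((pi_norm_le_iff_of_nonneg (hg i)).2 fun j => ?_)
    ((le_abs_self _).trans (norm_le_pi_norm g i))
  rw [Real.norm_of_nonneg (hg j)]
  exact hi ⟨j, rfl⟩

section Eigenvalues

variable {ι 𝕜 : Type*} [Fintype ι] [DecidableEq ι] [RCLike 𝕜]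

open scoped Matrix.Norms.L2Operator in
lemma l2_opNorm_eq_norm_eigenvalues {P : Matrix ι ι 𝕜} (hP : P.IsHermitian) :
    ‖P‖ = ‖hP.eigenvalues‖ := by
  conv_lhs => rw [hP.spectral_theorem, Unitary.conjStarAlgAut_apply]
  rw [← Unitary.coe_star, CStarRing.norm_mul_coe_unitary, CStarRing.norm_coe_unitary_mul,
    l2_opNorm_diagonal]
  simp [Pi.norm_def]

open scoped ComplexOrder in
lemma norm_toEuclideanCLM_eq_of_isGreatest_eigenvalues {P : Matrix ι ι 𝕜} (hP : P.PosSemidef)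
    {c : ℝ} (hc : IsGreatest (Set.range hP.isHermitian.eigenvalues) c) :
    ‖toEuclideanCLM (𝕜 := 𝕜) P‖ = c :=
  (l2_opNorm_eq_norm_eigenvalues hP.isHermitian).trans
    (norm_eq_of_isGreatest_range hP.eigenvalues_nonneg hc)

open scoped MatrixOrder in
lemma mul_norm_sq_le_inner_toEuclideanCLM {P : Matrix ι ι ℝ} (hP : P.IsHermitian) {c : ℝ}
    (hc : c ∈ lowerBounds (Set.range hP.eigenvalues)) (y : EuclideanSpace ℝ ι) :
    c * ‖y‖ ^ 2 ≤ ⟪y, toEuclideanCLM (𝕜 := ℝ) P y⟫ := by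
  have algebraMap_le : algebraMap ℝ _ c ≤ P :=
    algebraMap_le_of_le_spectrum (by rwa [hP.spectrum_real_eq_range_eigenvalues]) hP
  have inner_sub_nonneg : 0 ≤ ⟪y, toEuclideanCLM (𝕜 := ℝ) (P - algebraMap ℝ _ c) y⟫ := by
    rw [inner_toEuclideanCLM]
    exact (Matrix.le_iff.1 algebraMap_le).dotProduct_mulVec_nonneg y
  simpa [AlgHomClass.commutes, Algebra.algebraMap_eq_smul_one, inner_sub_right, inner_smul_right]
    using inner_sub_nonneg

end Eigenvalues

section InnerProductSpace

variable {E : Type*} [NormedAddCommGroup E] [InnerProductSpace ℝ E]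

lemma hasDerivAt_inner_map_self {T : E →L[ℝ] E} (hT : T.IsSymmetric) {x : ℝ → E} {v : E} {t : ℝ}
    (hx : HasDerivAt x v t) :
    HasDerivAt (fun s => ⟪x s, T (x s)⟫) (2 * ⟪x t, T v⟫) t := by
  have hTx : HasDerivAt (fun s => T (x s)) (T v) t := T.hasFDerivAt.comp_hasDerivAt t hx
  have symm : ⟪v, T (x t)⟫ = ⟪x t, T v⟫ := by
    rw [real_inner_comm]
    exact hT (x t) v
  refine (hx.inner ℝ hTx).congr_deriv ?_
  rw [symm, two_mul]

lemma inner_map_self_le_norm_mul_sq (T : E →L[ℝ] E) (y : E) : ⟪y, T y⟫ ≤ ‖T‖ * ‖y‖ ^ 2 :=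
  calc ⟪y, T y⟫ ≤ ‖y‖ * ‖T y‖ := real_inner_le_norm _ _
    _ ≤ ‖y‖ * (‖T‖ * ‖y‖) := by gcongr; exact T.le_opNorm y
    _ = ‖T‖ * ‖y‖ ^ 2 := by ring

lemma inner_map_map_le_add_norm_sub (T A₀ A : E →L[ℝ] E) (y : E) :
    ⟪y, T (A y)⟫ ≤ ⟪y, T (A₀ y)⟫ + ‖T‖ * ‖A - A₀‖ * ‖y‖ ^ 2 :=
  calc ⟪y, T (A y)⟫ = ⟪y, T (A₀ y)⟫ + ⟪y, (T ∘L (A - A₀)) y⟫ := by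
        simp [inner_sub_right]
    _ ≤ ⟪y, T (A₀ y)⟫ + ‖T ∘L (A - A₀)‖ * ‖y‖ ^ 2 := by
        gcongr
        exact inner_map_self_le_norm_mul_sq _ y
    _ ≤ ⟪y, T (A₀ y)⟫ + ‖T‖ * ‖A - A₀‖ * ‖y‖ ^ 2 := by
        gcongr
        exact T.opNorm_comp_le _

theorem lyapunov_differential_inequality_variational_general {P A₀ A : E →L[ℝ] E}
    (hP : P.IsSymmetric) {m : ℝ} (hm : 0 < m) (hPm : ∀ y, m * ‖y‖ ^ 2 ≤ ⟪y, P y⟫)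
    (hPA₀ : ∀ y, 2 * ⟪y, P (A₀ y)⟫ ≤ -‖y‖ ^ 2) {ε : ℝ} (hA : ‖A - A₀‖ ≤ ε)
    {x : ℝ → E} {t : ℝ} (hx : HasDerivAt x (A (x t)) t) :
    deriv (fun s => ⟪x s, P (x s)⟫) t ≤
      (-(1 / ‖P‖) + 2 * ‖P‖ / m * ε) * ⟪x t, P (x t)⟫ := by
  set y := x t
  set V := ⟪y, P y⟫
  have hε : 0 ≤ ε := (norm_nonneg _).trans hA
  have div_norm_le : V / ‖P‖ ≤ ‖y‖ ^ 2 :=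
    div_le_of_le_mul₀ (norm_nonneg P) (sq_nonneg _) <| by
      rw [mul_comm]
      exact inner_map_self_le_norm_mul_sq P y
  have le_div : ‖y‖ ^ 2 ≤ V / m := (le_div_iff₀' hm).2 (hPm y)
  calc deriv (fun s => ⟪x s, P (x s)⟫) t
      = 2 * ⟪y, P (A y)⟫ := (hasDerivAt_inner_map_self hP hx).deriv
    _ ≤ 2 * (⟪y, P (A₀ y)⟫ + ‖P‖ * ‖A - A₀‖ * ‖y‖ ^ 2) := by
        gcongr
        exact inner_map_map_le_add_norm_sub P A₀ A y
    _ = 2 * ⟪y, P (A₀ y)⟫ + 2 * ‖P‖ * ‖A - A₀‖ * ‖y‖ ^ 2 := by ring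
    _ ≤ -‖y‖ ^ 2 + 2 * ‖P‖ * ε * ‖y‖ ^ 2 := by
        gcongr
        exact hPA₀ y
    _ ≤ -(V / ‖P‖) + 2 * ‖P‖ * ε * (V / m) := by gcongr
    _ = (-(1 / ‖P‖) + 2 * ‖P‖ / m * ε) * V := by ring

end InnerProductSpace

/-- Differential inequality for the Lyapunov function
`V(t) = x¹(t)ᵀ P x¹(t)` along the variational (first-order) system:
`V̇ ≤ (−1/λ_max(P) + (2λ_max(P)/λ_min(P)) L ‖x⁰(t)‖) V`. -/
theorem lyapunov_differential_inequality_variational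
    (n : ℕ)
    (f : EuclideanSpace ℝ (Fin n) → EuclideanSpace ℝ (Fin n))
    (hf0 : f 0 = 0)
    (hfd : Differentiable ℝ f)
    (L : ℝ) (hL : 0 < L)
    (hLip : ∀ x y : EuclideanSpace ℝ (Fin n),
      ‖fderiv ℝ f x - fderiv ℝ f y‖ ≤ L * ‖x - y‖)
    (P : Matrix (Fin n) (Fin n) ℝ)
    (hP : P.IsHermitian) (hPpos : P.PosDef)
    (hPLyap : ∀ y : EuclideanSpace ℝ (Fin n),
      2 * ((y : Fin n → ℝ) ⬝ᵥ P.mulVec (fderiv ℝ f 0 y : Fin n → ℝ)) ≤ -‖y‖ ^ 2)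
    (lmin lmax : ℝ)
    (hlmin : IsLeast (Set.range hP.eigenvalues) lmin)
    (hlmax : IsGreatest (Set.range hP.eigenvalues) lmax)
    -- the nominal trajectory
    (x0 : ℝ → EuclideanSpace ℝ (Fin n))
    (hx0 : ∀ t : ℝ, 0 ≤ t → HasDerivAt x0 (f (x0 t)) t)
    -- a solution of the variational system along the nominal trajectory
    (x1 : ℝ → EuclideanSpace ℝ (Fin n))
    (hx1 : ∀ t : ℝ, 0 ≤ t → HasDerivAt x1 (fderiv ℝ f (x0 t) (x1 t)) t) :
    ∀ t : ℝ, 0 ≤ t →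
      deriv (fun s => (x1 s : Fin n → ℝ) ⬝ᵥ P.mulVec (x1 s : Fin n → ℝ)) t ≤
        (-(1 / lmax) + (2 * lmax / lmin) * L * ‖x0 t‖) *
          ((x1 t : Fin n → ℝ) ⬝ᵥ P.mulVec (x1 t : Fin n → ℝ)) := by
  intro t ht
  have norm_P : ‖toEuclideanCLM (𝕜 := ℝ) P‖ = lmax :=
    norm_toEuclideanCLM_eq_of_isGreatest_eigenvalues hPpos.posSemidef hlmax
  have lmin_pos : 0 < lmin := Set.forall_mem_range.2 hPpos.eigenvalues_pos _ hlmin.1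
  have fderiv_sub_le : ‖fderiv ℝ f (x0 t) - fderiv ℝ f 0‖ ≤ L * ‖x0 t‖ := by
    simpa using hLip (x0 t) 0
  simpa only [inner_toEuclideanCLM, norm_P, mul_assoc] using
    lyapunov_differential_inequality_variational_general
      (isSymmetric_toEuclideanLin_iff.2 hP) lmin_pos
      (mul_norm_sq_le_inner_toEuclideanCLM hP hlmin.2)
      (by simpa only [inner_toEuclideanCLM] using hPLyap) fderiv_sub_le (hx1 t ht)
end
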